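/- For all real numbers b, c, d, the polynomial maps F(x,y) = (x, xy² + y⁵ + by⁷ + cy⁸ + dy⁹) and G(x,y) = (x, xy² + y⁵ + (d − (5/6)b²)y⁹) have A⁹-equivalent 9-jets at the origin: j⁹F(0) ∼_{A⁹} j⁹G(0). -/

import Mathlib

open Filter Topology

noncomputable section

/-- Directional derivative of a scalar function. -/
def dop (v : ℝ × ℝ) (g : ℝ × ℝ → ℝ) : ℝ × ℝ → ℝ :=
  fun p => fderiv ℝ g p v

/-- Partial derivative operator in the first coordinate. -/
def pdx : (ℝ × ℝ → ℝ) → ℝ × ℝ → ℝ := dop (1, 0)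

/-- Partial derivative operator in the second coordinate. -/
def pdy : (ℝ × ℝ → ℝ) → ℝ × ℝ → ℝ := dop (0, 1)

/-- Taylor coefficient `a_{ij} = ∂_x^i ∂_y^j g(0,0) / (i! j!)` of `g` at the origin. -/
def tcoeff (g : ℝ × ℝ → ℝ) (i j : ℕ) : ℝ :=
  (pdx^[i] (pdy^[j] g)) 0 / (Nat.factorial i * Nat.factorial j)

/-- The Jacobian determinant `λ_f` of a map `f : ℝ² → ℝ²`. -/
def jacDet (f : ℝ × ℝ → ℝ × ℝ) (p : ℝ × ℝ) : ℝ :=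
  (fderiv ℝ f p (1, 0)).1 * (fderiv ℝ f p (0, 1)).2 -
    (fderiv ℝ f p (1, 0)).2 * (fderiv ℝ f p (0, 1)).1

/-- `f` has corank one at `0` : the derivative of `f` at `0` has rank one. -/
def CorankOne (f : ℝ × ℝ → ℝ × ℝ) : Prop :=
  LinearMap.rank ((fderiv ℝ f 0).toLinearMap) = 1

/-- `η` is a null vector field for `f` near `0`. -/
def IsNullVF (f η : ℝ × ℝ → ℝ × ℝ) : Prop :=
  η 0 ≠ 0 ∧ ∃ U ∈ 𝓝 (0 : ℝ × ℝ),
    ContDiffOn ℝ (⊤ : ℕ∞) η U ∧ ∀ p ∈ U, jacDet f p = 0 → fderiv ℝ f p (η p) = 0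

/-- The derivative `(ηg)(p) = Dg(p)(η(p))` of `g` along the vector field `η`. -/
def etaD (η : ℝ × ℝ → ℝ × ℝ) (g : ℝ × ℝ → ℝ) : ℝ × ℝ → ℝ :=
  fun p => fderiv ℝ g p (η p)

/-- The iterated derivative `η^k g` along the vector field `η`. -/
def etaIter (η : ℝ × ℝ → ℝ × ℝ) : ℕ → (ℝ × ℝ → ℝ) → ℝ × ℝ → ℝ
  | 0, g => g
  | k + 1, g => etaD η (etaIter η k g)

/-- The Hessian matrix of second partial derivatives of `g` at `0`. -/
def hess (g : ℝ × ℝ → ℝ) : Matrix (Fin 2) (Fin 2) ℝ :=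
  !![pdx (pdx g) 0, pdx (pdy g) 0; pdy (pdx g) 0, pdy (pdy g) 0]

/-- `A^r`-equivalence of the `r`-jets at `0` of two map-germs `(ℝ²,0) → (ℝ²,0)`. -/
def JetEquiv (r : ℕ) (f g : ℝ × ℝ → ℝ × ℝ) : Prop :=
  ∃ φ ψ : ℝ × ℝ → ℝ × ℝ,
    ContDiff ℝ (⊤ : ℕ∞) φ ∧ ContDiff ℝ (⊤ : ℕ∞) ψ ∧ φ 0 = 0 ∧ ψ 0 = 0 ∧
    Function.Bijective (⇑(fderiv ℝ φ 0)) ∧ Function.Bijective (⇑(fderiv ℝ ψ 0)) ∧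
    ∀ i ≤ r, iteratedFDeriv ℝ i (ψ ∘ f ∘ φ) 0 = iteratedFDeriv ℝ i g 0

/-- `A`-equivalence of two map-germs `(ℝ²,0) → (ℝ²,0)`. -/
def AEquiv (f g : ℝ × ℝ → ℝ × ℝ) : Prop :=
  ∃ φ ψ : ℝ × ℝ → ℝ × ℝ,
    ContDiff ℝ (⊤ : ℕ∞) φ ∧ ContDiff ℝ (⊤ : ℕ∞) ψ ∧ φ 0 = 0 ∧ ψ 0 = 0 ∧
    Function.Bijective (⇑(fderiv ℝ φ 0)) ∧ Function.Bijective (⇑(fderiv ℝ ψ 0)) ∧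
    ∀ᶠ p in 𝓝 (0 : ℝ × ℝ), ψ (f (φ p)) = g p

/-- `f` has the form `(x, g(x,y))` where `g` is `C^∞` and the Taylor coefficients of `g`
of total degree `< N` at the origin are prescribed by `P`. -/
def HasForm (f : ℝ × ℝ → ℝ × ℝ) (g : ℝ × ℝ → ℝ) (N : ℕ) (P : ℕ → ℕ → ℝ) : Prop :=
  ContDiff ℝ (⊤ : ℕ∞) g ∧ (∀ p, f p = (p.1, g p)) ∧
    ∀ i j, i + j < N → tcoeff g i j = P i j


open scoped ContDiff

/-- `h` is smooth and its derivatives of order `< n` vanish at the origin. -/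
def Van {F : Type*} [NormedAddCommGroup F] [NormedSpace ℝ F] (n : ℕ) (h : ℝ × ℝ → F) : Prop :=
  ContDiff ℝ ∞ h ∧ ∀ i < n, iteratedFDeriv ℝ i h 0 = 0

theorem Van.add {n : ℕ} {f g : ℝ × ℝ → ℝ} (hf : Van n f) (hg : Van n g) :
    Van n (fun p => f p + g p) := by
  refine ⟨hf.1.add hg.1, fun i hi => ?_⟩
  have := iteratedFDeriv_add_apply (x := (0 : ℝ × ℝ))
    (hf.1.contDiffAt.of_le (by exact_mod_cast le_top) : ContDiffAt ℝ i f 0)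
    (hg.1.contDiffAt.of_le (by exact_mod_cast le_top))
  change iteratedFDeriv ℝ i (f + g) 0 = 0
  rw [this, hf.2 i hi, hg.2 i hi, add_zero]

theorem Van.mul {m n : ℕ} {f g : ℝ × ℝ → ℝ} (hf : Van m f) (hg : Van n g) :
    Van (m + n) (fun p => f p * g p) := by
  refine ⟨hf.1.mul hg.1, fun i hi => ?_⟩
  have := norm_iteratedFDeriv_mul_le hf.1 hg.1 0 (n := i) (by exact_mod_cast le_top)
  rw [← norm_le_zero_iff]
  refine this.trans (le_of_eq (Finset.sum_eq_zero fun j hj => ?_))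
  have hj' := Finset.mem_range.1 hj
  rcases lt_or_ge j m with h | h
  · rw [hf.2 j h]; simp
  · rw [hg.2 (i - j) (by omega)]; simp

theorem Van.zero {f : ℝ × ℝ → ℝ} (hf : ContDiff ℝ ∞ f) : Van 0 f := ⟨hf, by simp⟩

theorem Van.one {f : ℝ × ℝ → ℝ} (hf : ContDiff ℝ ∞ f) (h0 : f 0 = 0) : Van 1 f := by
  refine ⟨hf, fun i hi => ?_⟩
  obtain rfl : i = 0 := by omega
  ext v
  simp [h0]

theorem Van.pow {f : ℝ × ℝ → ℝ} (hf : Van 1 f) (k : ℕ) : Van k (fun p => f p ^ k) := by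
  induction k with
  | zero => exact Van.zero (by simpa using contDiff_const)
  | succ k ih => simpa [pow_succ] using ih.mul hf

theorem Van.mono {m n : ℕ} {f : ℝ × ℝ → ℝ} (hf : Van m f) (h : n ≤ m) : Van n f :=
  ⟨hf.1, fun i hi => hf.2 i (by omega)⟩

theorem van_mono (n i j : ℕ) (h : n ≤ i + j) {k : ℝ × ℝ → ℝ} (hk : ContDiff ℝ ∞ k) :
    Van n (fun p => p.1 ^ i * p.2 ^ j * k p) :=
  ((((Van.one contDiff_fst rfl).pow i).mul ((Van.one contDiff_snd rfl).pow j)).mul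
    (Van.zero hk)).mono (by omega)

theorem Van.prodMk {n : ℕ} {f g : ℝ × ℝ → ℝ} (hf : Van n f) (hg : Van n g) :
    Van n (fun p => (f p, g p)) := by
  refine ⟨hf.1.prodMk hg.1, fun i hi => ?_⟩
  rw [iteratedFDeriv_prodMk hf.1.contDiffAt hg.1.contDiffAt (by exact_mod_cast le_top),
    hf.2 i hi, hg.2 i hi]
  rfl

theorem Van.comp {n : ℕ} {h θ : ℝ × ℝ → ℝ × ℝ} (hh : Van n h) (hθ : ContDiff ℝ ∞ θ)
    (h0 : θ 0 = 0) : Van n (h ∘ θ) := by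
  refine ⟨hh.1.comp hθ, fun i hi => ?_⟩
  rw [← norm_le_zero_iff]
  set D : ℝ := 1 + ∑ j ∈ Finset.range (i + 1), ‖iteratedFDeriv ℝ j θ 0‖ with hD
  have := norm_iteratedFDeriv_comp_le hh.1 hθ (n := i) (by exact_mod_cast le_top) 0 (C := 0) (D := D)
    (fun j hj => by rw [h0, hh.2 j (by omega)]; simp)
    (fun j h1 hj => by
      have h2 : ‖iteratedFDeriv ℝ j θ 0‖ ≤ ∑ j ∈ Finset.range (i + 1), ‖iteratedFDeriv ℝ j θ 0‖ :=
        Finset.single_le_sum (f := fun j => ‖iteratedFDeriv ℝ j θ 0‖)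
          (fun _ _ => norm_nonneg _) (Finset.mem_range.2 (by omega))
      have h3 : 0 ≤ ‖iteratedFDeriv ℝ j θ 0‖ := norm_nonneg _
      exact (by linarith : _ ≤ D).trans (le_self_pow₀ (by linarith) (by omega)))
  simpa using this

theorem exists_inverse {φ : ℝ × ℝ → ℝ × ℝ} (hφ : ContDiff ℝ ω φ) (h0 : φ 0 = 0)
    (hb : Function.Bijective (⇑(fderiv ℝ φ 0))) :
    ∃ θ : ℝ × ℝ → ℝ × ℝ, ContDiff ℝ ∞ θ ∧ θ 0 = 0 ∧ Function.Bijective (⇑(fderiv ℝ θ 0)) ∧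
      ∀ᶠ p in 𝓝 0, φ (θ p) = p := by
  let e : (ℝ × ℝ) ≃L[ℝ] (ℝ × ℝ) := ContinuousLinearEquiv.ofBijective (fderiv ℝ φ 0)
    (LinearMap.ker_eq_bot.2 hb.1) (LinearMap.range_eq_top.2 hb.2)
  have hω : (ω : WithTop ℕ∞) ≠ 0 := by simp
  have hd : HasFDerivAt φ (e : (ℝ × ℝ) →L[ℝ] (ℝ × ℝ)) 0 := by
    have : (e : (ℝ × ℝ) →L[ℝ] (ℝ × ℝ)) = fderiv ℝ φ 0 := by ext <;> rfl
    rw [this]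
    exact (hφ.differentiable hω 0).hasFDerivAt
  have hs := hφ.contDiffAt.hasStrictFDerivAt' hd hω
  set τ := hs.localInverse φ e 0 with hτ
  have hτω : ContDiffAt ℝ ω τ 0 := by
    have := hφ.contDiffAt.to_localInverse hd hω
    rwa [h0] at this
  have hτ0 : τ 0 = 0 := by
    have := hs.localInverse_apply_image
    rwa [h0] at this
  have hτd : HasStrictFDerivAt τ (e.symm : (ℝ × ℝ) →L[ℝ] (ℝ × ℝ)) 0 := by
    have := hs.to_localInverse
    rwa [h0] at this
  have hτi : ∀ᶠ p in 𝓝 0, φ (τ p) = p := by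
    have := hs.eventually_right_inverse
    rwa [h0] at this
  obtain ⟨r, hr, hball⟩ := Metric.eventually_nhds_iff_ball.1 (hτω.eventually (by simp))
  let χ : ContDiffBump (0 : ℝ × ℝ) := ⟨r / 4, r / 2, by positivity, by linarith⟩
  have heq : (fun p => χ p • τ p) =ᶠ[𝓝 0] τ := by
    filter_upwards [χ.eventuallyEq_one] with p hp
    simp [hp]
  refine ⟨fun p => χ p • τ p, ?_, by simp [hτ0], ?_, ?_⟩
  · rw [contDiff_iff_contDiffAt]
    intro p
    by_cases hp : p ∈ tsupport χ
    · rw [χ.tsupport_eq] at hp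
      have hp' : p ∈ Metric.ball (0 : ℝ × ℝ) r :=
        Metric.closedBall_subset_ball (show r / 2 < r by linarith) hp
      exact χ.contDiff.contDiffAt.smul ((hball p hp').of_le (by simp))
    · have : (fun p => χ p • τ p) =ᶠ[𝓝 p] fun _ => 0 := by
        filter_upwards [notMem_tsupport_iff_eventuallyEq.1 hp] with q hq
        simp [hq]
      exact contDiffAt_const.congr_of_eventuallyEq this
  · rw [heq.fderiv_eq, hτd.hasFDerivAt.fderiv]
    exact e.symm.bijective
  · filter_upwards [heq, hτi] with p h1 h2
    rw [h1, h2]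

theorem jetEquiv_of_van {f g φ ψ : ℝ × ℝ → ℝ × ℝ} {r : ℕ} (hf : ContDiff ℝ ω f)
    (hg : ContDiff ℝ ω g) (hφ : ContDiff ℝ ω φ) (hψ : ContDiff ℝ ω ψ) (hφ0 : φ 0 = 0)
    (hψ0 : ψ 0 = 0) (hφb : Function.Bijective (⇑(fderiv ℝ φ 0)))
    (hψb : Function.Bijective (⇑(fderiv ℝ ψ 0)))
    (hv : Van (r + 1) (fun p => ψ (f p) - g (φ p))) : JetEquiv r f g := by
  obtain ⟨θ, hθ, hθ0, hθb, hθi⟩ := exists_inverse hφ hφ0 hφb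
  have hle : (∞ : WithTop ℕ∞) ≤ ω := by simp
  refine ⟨θ, ψ, hθ, hψ.of_le hle, hθ0, hψ0, hθb, hψb, fun i hi => ?_⟩
  have h1 := (hv.comp hθ hθ0).2 i (by omega)
  have h2 : ((fun p => ψ (f p) - g (φ p)) ∘ θ) =ᶠ[𝓝 0] ((ψ ∘ f ∘ θ) - g) := by
    filter_upwards [hθi] with p hp
    simp [hp]
  have h3 := (h2.iteratedFDeriv ℝ i).eq_of_nhds
  have hc : ContDiff ℝ ∞ (ψ ∘ f ∘ θ) := (hψ.of_le hle).comp ((hf.of_le hle).comp hθ)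
  rw [h1, iteratedFDeriv_sub_apply (hc.contDiffAt.of_le (by exact_mod_cast le_top))
    ((hg.of_le hle).contDiffAt.of_le (by exact_mod_cast le_top))] at h3
  exact sub_eq_zero.1 h3.symm

/-- Coefficients of the coordinate change removing the eighth degree term. -/
def cR1 (a x : ℝ) : ℝ := -1 / 2 * (1 + a * x) * (3 * a + 3 * a ^ 2 * x + a ^ 3 * x ^ 2)

def cM (a b x y : ℝ) : ℝ := -1 / 2 * b * (5 * a + 15 * a ^ 2 * x) + 111 / 8 * a ^ 2 * y

def cQ (a b x y : ℝ) : ℝ := cR1 a x + y ^ 2 * cM a b x y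

def cr (a b x y : ℝ) : ℝ := 1 + a * x + y ^ 3 * cQ a b x y

def cS (b w : ℝ) : ℝ := b / 3 + b ^ 2 / 6 * w ^ 2 + 5 / 54 * b ^ 3 * w ^ 4

def cRR (b w : ℝ) : ℝ := 1 + w ^ 2 * cS b w

def cH (b d x w : ℝ) : ℝ := x * w ^ 2 + w ^ 5 + b * w ^ 7 + d * w ^ 9

def cK1 (a b x : ℝ) : ℝ :=
    (-20) * a ^ 3 * b ^ 1 + (-35) * x ^ 1 * a ^ 4 * b ^ 1 + (-21) * x ^ 2 * a ^ 5 * b ^ 1 +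
    (-7) * x ^ 3 * a ^ 6 * b ^ 1 + (-1) * x ^ 4 * a ^ 7 * b ^ 1

def cK2 (a x : ℝ) : ℝ :=
    (283/4) * a ^ 3 + (295/2) * x ^ 1 * a ^ 4 + (124) * x ^ 2 * a ^ 5 + (63) * x ^ 3 * a ^ 6
    + (18) * x ^ 4 * a ^ 7 + (9/4) * x ^ 5 * a ^ 8

def cK3 (a d x : ℝ) : ℝ :=
    (-7) * a ^ 1 * d ^ 1 + (-35) * x ^ 1 * a ^ 2 * d ^ 1 + (-84) * x ^ 2 * a ^ 3 * d ^ 1 +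
    (-126) * x ^ 3 * a ^ 4 * d ^ 1 + (-126) * x ^ 4 * a ^ 5 * d ^ 1 + (-84) * x ^ 5 * a ^ 6
    * d ^ 1 + (-36) * x ^ 6 * a ^ 7 * d ^ 1 + (-9) * x ^ 7 * a ^ 8 * d ^ 1 + (-1) * x ^ 8 *
    a ^ 9 * d ^ 1

def cZ5 (a x y q : ℝ) : ℝ :=
    10 * (1 + a * x) ^ 3 * q ^ 2 * y ^ 0 + 10 * (1 + a * x) ^ 2 * q ^ 3 * y ^ 3 + 5 * (1 + a
    * x) ^ 1 * q ^ 4 * y ^ 6 + 1 * (1 + a * x) ^ 0 * q ^ 5 * y ^ 9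

def cZ7 (a x y q : ℝ) : ℝ :=
    7 * (1 + a * x) ^ 6 * q ^ 1 * y ^ 0 + 21 * (1 + a * x) ^ 5 * q ^ 2 * y ^ 3 + 35 * (1 + a
    * x) ^ 4 * q ^ 3 * y ^ 6 + 35 * (1 + a * x) ^ 3 * q ^ 4 * y ^ 9 + 21 * (1 + a * x) ^ 2 *
    q ^ 5 * y ^ 12 + 7 * (1 + a * x) ^ 1 * q ^ 6 * y ^ 15 + 1 * (1 + a * x) ^ 0 * q ^ 7 * y
    ^ 18

def cZ9 (a x y q : ℝ) : ℝ :=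
    9 * (1 + a * x) ^ 8 * q ^ 1 * y ^ 0 + 36 * (1 + a * x) ^ 7 * q ^ 2 * y ^ 3 + 84 * (1 + a
    * x) ^ 6 * q ^ 3 * y ^ 6 + 126 * (1 + a * x) ^ 5 * q ^ 4 * y ^ 9 + 126 * (1 + a * x) ^ 4
    * q ^ 5 * y ^ 12 + 84 * (1 + a * x) ^ 3 * q ^ 6 * y ^ 15 + 36 * (1 + a * x) ^ 2 * q ^ 7
    * y ^ 18 + 9 * (1 + a * x) ^ 1 * q ^ 8 * y ^ 21 + 1 * (1 + a * x) ^ 0 * q ^ 9 * y ^ 24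

def cK4 (a b d x y : ℝ) : ℝ :=
  - x * (2 * cR1 a x * cM a b x y + y ^ 2 * cM a b x y ^ 2)
    - 5 * (1 + a * x) ^ 4 * cM a b x y - y * cZ5 a x y (cQ a b x y)
    - b * cZ7 a x y (cQ a b x y) - d * y ^ 2 * cZ9 a x y (cQ a b x y)

def cL1 (b w : ℝ) : ℝ :=
    (35/324) * b ^ 4 + (7/243) * w ^ 2 * b ^ 5 + (35/2916) * w ^ 4 * b ^ 6 + (25/4374) * w ^
    6 * b ^ 7

def cL2 (b d w : ℝ) : ℝ :=
    (-7/3) * w ^ 1 * b ^ 1 * d ^ 1 + (35/27) * w ^ 1 * b ^ 3 + (-91/18) * w ^ 3 * b ^ 2 * d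
    ^ 1 + (385/108) * w ^ 3 * b ^ 4 + (-413/54) * w ^ 5 * b ^ 3 * d ^ 1 + (1897/324) * w ^ 5
    * b ^ 5 + (-749/81) * w ^ 7 * b ^ 4 * d ^ 1 + (7133/972) * w ^ 7 * b ^ 6 + (-4669/486) *
    w ^ 9 * b ^ 5 * d ^ 1 + (22655/2916) * w ^ 9 * b ^ 7 + (-4249/486) * w ^ 11 * b ^ 6 * d
    ^ 1 + (83575/11664) * w ^ 11 * b ^ 8 + (-15553/2187) * w ^ 13 * b ^ 7 * d ^ 1 +
    (1849555/314928) * w ^ 13 * b ^ 9 + (-1133/216) * w ^ 15 * b ^ 8 * d ^ 1 +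
    (8221427/1889568) * w ^ 15 * b ^ 10 + (-557015/157464) * w ^ 17 * b ^ 9 * d ^ 1 +
    (16674925/5668704) * w ^ 17 * b ^ 11 + (-76711/34992) * w ^ 19 * b ^ 10 * d ^ 1 +
    (31039955/17006112) * w ^ 19 * b ^ 12 + (-131729/104976) * w ^ 21 * b ^ 11 * d ^ 1 +
    (53332745/51018336) * w ^ 21 * b ^ 13 + (-1885343/2834352) * w ^ 23 * b ^ 12 * d ^ 1 +
    (7069255/12754584) * w ^ 23 * b ^ 14 + (-926521/2834352) * w ^ 25 * b ^ 13 * d ^ 1 +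
    (62538605/229582512) * w ^ 25 * b ^ 15 + (-2536775/17006112) * w ^ 27 * b ^ 14 * d ^ 1 +
    (12683875/102036672) * w ^ 27 * b ^ 16 + (-9669503/153055008) * w ^ 29 * b ^ 15 * d ^ 1
    + (48347515/918330048) * w ^ 29 * b ^ 17 + (-10123019/408146688) * w ^ 31 * b ^ 16 * d ^
    1 + (50615095/2448880128) * w ^ 31 * b ^ 18 + (-33118361/3673320192) * w ^ 33 * b ^ 17 *
    d ^ 1 + (165591805/22039921152) * w ^ 33 * b ^ 19 + (-199906841/66119763456) * w ^ 35 *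
    b ^ 18 * d ^ 1 + (999534205/396718580736) * w ^ 35 * b ^ 20 + (-20525135/22039921152) *
    w ^ 37 * b ^ 19 * d ^ 1 + (102625675/132239526912) * w ^ 37 * b ^ 21 +
    (-6501025/24794911296) * w ^ 39 * b ^ 20 * d ^ 1 + (32505125/148769467776) * w ^ 39 * b
    ^ 22 + (-465875/6973568802) * w ^ 41 * b ^ 21 * d ^ 1 + (2329375/41841412812) * w ^ 41 *
    b ^ 23 + (-13600625/892616806656) * w ^ 43 * b ^ 22 * d ^ 1 + (68003125/5355700839936) *
    w ^ 43 * b ^ 24 + (-8209375/2677850419968) * w ^ 45 * b ^ 23 * d ^ 1 +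
    (41046875/16067102519808) * w ^ 45 * b ^ 25 + (-4234375/8033551259904) * w ^ 47 * b ^ 24
    * d ^ 1 + (21171875/48201307559424) * w ^ 47 * b ^ 26 + (-1796875/24100653779712) * w ^
    49 * b ^ 25 * d ^ 1 + (8984375/144603922678272) * w ^ 49 * b ^ 27 +
    (-390625/48201307559424) * w ^ 51 * b ^ 26 * d ^ 1 + (1953125/289207845356544) * w ^ 51
    * b ^ 28 + (-1953125/3904305912313344) * w ^ 53 * b ^ 27 * d ^ 1 +
    (9765625/23425835473880064) * w ^ 53 * b ^ 29

theorem alg1 (a b d x y : ℝ) :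
    (x * y ^ 2 + y ^ 5 + b * y ^ 7 + (-15 / 2 * a) * y ^ 8 + d * y ^ 9) * (1 + a * x) ^ 2
      - cH b d x (y * cr a b x y) =
    x ^ 3 * y ^ 7 * cK1 a b x + x ^ 2 * y ^ 8 * cK2 a x + x ^ 1 * y ^ 9 * cK3 a d x
      + x ^ 0 * y ^ 10 * cK4 a b d x y := by
  have h3 : (1 + a * x) ^ 2 - (1 + a * x) ^ 5 - 2 * x * (1 + a * x) * cR1 a x = 0 := by
    unfold cR1; ring
  have h5 : b * (1 + a * x) ^ 2 - b * (1 + a * x) ^ 7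
      - 2 * x * (1 + a * x) * (-1 / 2 * b * (5 * a + 15 * a ^ 2 * x)) = x ^ 3 * cK1 a b x := by
    unfold cK1; ring
  have h6 : (-15 / 2 * a) * (1 + a * x) ^ 2 - 2 * x * (1 + a * x) * (111 / 8 * a ^ 2)
      - x * cR1 a x ^ 2 - 5 * (1 + a * x) ^ 4 * cR1 a x = x ^ 2 * cK2 a x := by
    unfold cR1 cK2; ring
  have h7 : d * ((1 + a * x) ^ 2 - (1 + a * x) ^ 9) = x * cK3 a d x := by
    unfold cK3; ring
  have e5 : cr a b x y ^ 5 = (1 + a * x) ^ 5 + 5 * (1 + a * x) ^ 4 * y ^ 3 * cQ a b x y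
      + y ^ 6 * cZ5 a x y (cQ a b x y) := by
    unfold cr cZ5
    generalize cQ a b x y = q
    generalize 1 + a * x = s
    ring
  have e7 : cr a b x y ^ 7 = (1 + a * x) ^ 7 + y ^ 3 * cZ7 a x y (cQ a b x y) := by
    unfold cr cZ7
    generalize cQ a b x y = q
    generalize 1 + a * x = s
    ring
  have e9 : cr a b x y ^ 9 = (1 + a * x) ^ 9 + y ^ 3 * cZ9 a x y (cQ a b x y) := by
    unfold cr cZ9
    generalize cQ a b x y = q
    generalize 1 + a * x = s
    ring
  have e2 : cr a b x y ^ 2 = (1 + a * x) ^ 2 + 2 * (1 + a * x) * y ^ 3 * cQ a b x y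
      + y ^ 6 * cQ a b x y ^ 2 := by
    unfold cr; ring
  have hq : cQ a b x y = cR1 a x + y ^ 2 * cM a b x y := rfl
  have hm : cM a b x y = -1 / 2 * b * (5 * a + 15 * a ^ 2 * x) + 111 / 8 * a ^ 2 * y := rfl
  unfold cH cK4
  simp only [mul_pow, e2, e5, e7, e9]
  generalize cZ5 a x y (cQ a b x y) = z5
  generalize cZ7 a x y (cQ a b x y) = z7
  generalize cZ9 a x y (cQ a b x y) = z9
  rw [hq]
  generalize cR1 a x = r1 at *
  generalize cM a b x y = m at *
  generalize cK1 a b x = k1 at *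
  generalize cK2 a x = k2 at *
  generalize cK3 a d x = k3 at *
  linear_combination y ^ 5 * h3 + y ^ 7 * h5 + y ^ 8 * h6 + y ^ 9 * h7
    - 2 * x * y ^ 7 * (1 + a * x) * hm

theorem alg2 (b d x w : ℝ) :
    cH b d x w - ((x - 2 / 3 * b * cH b d x w) * (w * cRR b w) ^ 2 + (w * cRR b w) ^ 5
      + (d - 5 / 6 * b ^ 2) * (w * cRR b w) ^ 9) =
    w ^ 10 * (x * cL1 b w + cL2 b d w) := by
  unfold cH cRR cS cL1 cL2
  ring

theorem bij_of_van {φ : ℝ × ℝ → ℝ × ℝ} {u v : ℝ × ℝ → ℝ} (t : ℝ) (hu : Van 2 u) (hv : Van 2 v)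
    (h : φ = fun p => (p.1 + t * p.2 + u p, p.2 + v p)) :
    Function.Bijective (⇑(fderiv ℝ φ 0)) := by
  have key : ∀ f : ℝ × ℝ → ℝ, Van 2 f → HasFDerivAt f (0 : (ℝ × ℝ) →L[ℝ] ℝ) 0 := by
    intro f hf
    have h1 : fderiv ℝ f 0 = 0 := by
      ext
      all_goals
        first
        | (have := congrArg (fun m => m (fun _ => ((1 : ℝ), (0 : ℝ)))) (hf.2 1 (by norm_num))
           simpa using this; done)
        | (have := congrArg (fun m => m (fun _ => ((0 : ℝ), (1 : ℝ)))) (hf.2 1 (by norm_num))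
           simpa using this)
    rw [← h1]
    exact (hf.1.differentiable (by simp) 0).hasFDerivAt
  have hd : HasFDerivAt φ ((ContinuousLinearMap.fst ℝ ℝ ℝ + t • ContinuousLinearMap.snd ℝ ℝ ℝ
      + 0).prod (ContinuousLinearMap.snd ℝ ℝ ℝ + 0)) 0 := by
    rw [h]
    exact ((hasFDerivAt_fst.add (hasFDerivAt_snd.const_mul t)).add (key u hu)).prodMk
      (hasFDerivAt_snd.add (key v hv))
  rw [hd.fderiv]
  constructor
  · rintro ⟨x, y⟩ ⟨x', y'⟩ hxy
    simp at hxy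
    obtain ⟨h1, rfl⟩ := hxy
    simpa using h1
  · rintro ⟨x, y⟩
    exact ⟨(x - t * y, y), by simp⟩

theorem stmt12 (b c d : ℝ) :
    JetEquiv 9 (fun p => (p.1, p.1 * p.2 ^ 2 + p.2 ^ 5 + b * p.2 ^ 7 + c * p.2 ^ 8 + d * p.2 ^ 9))
      (fun p => (p.1, p.1 * p.2 ^ 2 + p.2 ^ 5 + (d - 5 / 6 * b ^ 2) * p.2 ^ 9)) := by
  obtain ⟨a, rfl⟩ : ∃ a : ℝ, c = -15 / 2 * a := ⟨-2 / 15 * c, by ring⟩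
  have hle : (∞ : WithTop ℕ∞) ≤ ω := by simp
  have hv1 : Van 10 (fun p : ℝ × ℝ =>
      (p.1 * p.2 ^ 2 + p.2 ^ 5 + b * p.2 ^ 7 + (-15 / 2 * a) * p.2 ^ 8 + d * p.2 ^ 9)
        * (1 + a * p.1) ^ 2 - cH b d p.1 (p.2 * cr a b p.1 p.2)) := by
    simp only [alg1]
    refine (((van_mono 10 3 7 (by norm_num) ?_).add (van_mono 10 2 8 (by norm_num) ?_)).add
      (van_mono 10 1 9 (by norm_num) ?_)).add (van_mono 10 0 10 (by norm_num) ?_)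
    · unfold cK1; fun_prop
    · unfold cK2; fun_prop
    · unfold cK3; fun_prop
    · unfold cK4 cZ5 cZ7 cZ9 cQ cM cR1; fun_prop
  have hv2 : Van 10 (fun p : ℝ × ℝ =>
      p.1 ^ 0 * p.2 ^ 10 * (cr a b p.1 p.2 ^ 10 * (p.1 * cL1 b (p.2 * cr a b p.1 p.2)
        + cL2 b d (p.2 * cr a b p.1 p.2)))) := by
    refine van_mono 10 0 10 (by norm_num) ?_
    unfold cL1 cL2 cr cQ cM cR1; fun_prop
  refine jetEquiv_of_van
    (φ := fun p => (p.1 - 2 / 3 * b * cH b d p.1 (p.2 * cr a b p.1 p.2),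
      (p.2 * cr a b p.1 p.2) * cRR b (p.2 * cr a b p.1 p.2)))
    (ψ := fun p => (p.1 - 2 / 3 * b * (p.2 * (1 + a * p.1) ^ 2), p.2 * (1 + a * p.1) ^ 2))
    (by fun_prop) (by fun_prop) ?_ (by fun_prop) ?_ ?_ ?_ ?_ ?_
  · unfold cH cRR cS cr cQ cM cR1; fun_prop
  · simp [cH]
  · simp
  · refine bij_of_van 0
      (u := fun p => p.1 ^ 0 * p.2 ^ 2 * (- 2 / 3 * b * (p.1 * cr a b p.1 p.2 ^ 2
        + p.2 ^ 3 * cr a b p.1 p.2 ^ 5 + b * p.2 ^ 5 * cr a b p.1 p.2 ^ 7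
        + d * p.2 ^ 7 * cr a b p.1 p.2 ^ 9)))
      (v := fun p => p.1 ^ 1 * p.2 ^ 1 * (a * cRR b (p.2 * cr a b p.1 p.2))
        + p.1 ^ 0 * p.2 ^ 2 * (p.2 ^ 2 * cQ a b p.1 p.2 * cRR b (p.2 * cr a b p.1 p.2)
          + p.2 * cr a b p.1 p.2 ^ 2 * cS b (p.2 * cr a b p.1 p.2)))
      (van_mono 2 0 2 (by norm_num) ?_)
      ((van_mono 2 1 1 (by norm_num) ?_).add (van_mono 2 0 2 (by norm_num) ?_)) ?_
    · unfold cr cQ cM cR1; fun_prop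
    · unfold cRR cS cr cQ cM cR1; fun_prop
    · unfold cRR cS cr cQ cM cR1; fun_prop
    · funext p
      refine Prod.ext ?_ ?_
      · simp only [cH]; ring
      · simp only [cRR, cr]; ring
  · refine bij_of_van (-2 / 3 * b)
      (u := fun p => p.1 ^ 1 * p.2 ^ 1 * (-2 / 3 * b * (2 * a + a ^ 2 * p.1)))
      (v := fun p => p.1 ^ 1 * p.2 ^ 1 * (2 * a + a ^ 2 * p.1))
      (van_mono 2 1 1 (by norm_num) (by fun_prop))
      (van_mono 2 1 1 (by norm_num) (by fun_prop)) ?_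
    funext p
    refine Prod.ext ?_ ?_
    · simp only []; ring
    · simp only []; ring
  · have hA := (Van.zero (contDiff_const (c := -2 / 3 * b))).mul hv1
    have hB := hv1.add hv2
    have hC := (hA.mono (n := 10) (by norm_num)).prodMk hB
    refine (congrArg (Van 10) ?_).mp hC
    funext p
    have h2 := alg2 b d p.1 (p.2 * cr a b p.1 p.2)
    refine Prod.ext ?_ ?_
    · simp only [Prod.fst_sub]; ring
    · simp only [Prod.snd_sub]
      rw [mul_pow p.2 (cr a b p.1 p.2) 10] at h2
      linear_combination -h2
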